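/- arXiv:2411.02101 — 2 statements merged into one kernel-verified Lean document; each statement's English description precedes it below -/
import Mathlib

section
/- Let R ⊆ S be an extension of commutative rings, where S is semilocal (S has only finitely many maximal ideals). Then R ⊆ S is strongly local if and only if R ⊆ S is an integral extension that is seminormal and infra-integral (all residual field extensions κ_R(Q ∩ R) → κ_S(Q), for Q a prime ideal of S, are isomorphisms), the extension has FIP (there are only finitely many intermediate rings T with R ⊆ T ⊆ S), and for every maximal ideal M of R with R_M ≠ S_M (i.e., every M ∈ MSupp(S/R), the set of maximal ideals in the support of the R-module S/R) the residue field R/M is isomorphic to Z/2Z (equivalently, R/M has exactly two elements). -/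
/-- A ring extension `R ⊆ S` is *strongly local* if `U(R) = U(S)`. -/
def Subring.IsSLExt {S : Type*} [CommRing S] (R : Subring S) : Prop :=
  ∀ x y : S, x * y = 1 → x ∈ R ∧ y ∈ R

namespace SLAux

variable {S : Type*} [CommRing S]

theorem unit_mem {R : Subring S} (h : R.IsSLExt) {u : S} (hu : IsUnit u) : u ∈ R := by
  obtain ⟨v, hv⟩ := hu.exists_right_inv
  exact (h u v hv).1

theorem isUnit_of_forall {u : S} (h : ∀ M : Ideal S, M.IsMaximal → u ∉ M) : IsUnit u := by
  by_contra hu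
  obtain ⟨M, hM, hm⟩ := exists_max_ideal_of_mem_nonunits hu
  exact h M hM hm

theorem key {R : Subring S} (hS : {M : Ideal S | M.IsMaximal}.Finite) (h : R.IsSLExt) (z : S)
    (hz : ∀ M : Ideal S, M.IsMaximal → ∃ u, u ∉ M ∧ u - z ∉ M) : z ∈ R := by
  have : Finite {M : Ideal S | M.IsMaximal} := hS
  choose! g hg1 hg2 using hz
  obtain ⟨u, hu⟩ := Ideal.exists_forall_sub_mem_ideal
    (I := fun M : {M : Ideal S | M.IsMaximal} => M.1)
    (by
      intro M N hMN
      have := M.2.out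
      have := N.2.out
      exact Ideal.isCoprime_of_isMaximal (fun e => hMN (Subtype.ext e))) (fun M => g M.1)
  have h1 : IsUnit u := isUnit_of_forall fun M hM hm => by
    have h2 := hu ⟨M, hM⟩
    exact hg1 M hM ((Submodule.sub_mem_iff_right M hm).1 h2)
  have h2 : IsUnit (u - z) := isUnit_of_forall fun M hM hm => by
    have h2 := M.sub_mem hm (hu ⟨M, hM⟩)
    refine hg2 M hM ?_
    convert h2 using 1
    ring
  have := R.sub_mem (unit_mem h h1) (unit_mem h h2)
  simpa using this

theorem boolean {R : Subring S} (hS : {M : Ideal S | M.IsMaximal}.Finite) (h : R.IsSLExt)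
    (x y : S) : (x ^ 2 - x) * y ∈ R := by
  refine key hS h _ fun M hM => ?_
  have h1 : (1 : S) ∉ M := fun h => hM.ne_top ((Ideal.eq_top_iff_one M).2 h)
  by_cases hz : 1 - (x ^ 2 - x) * y ∈ M
  · refine ⟨x, fun hx => h1 ?_, fun hx => h1 ?_⟩
    · have : (1 - (x ^ 2 - x) * y) + x * ((x - 1) * y) ∈ M :=
        M.add_mem hz (M.mul_mem_right _ hx)
      convert this using 1
      ring
    · have h3 : x - 1 ∈ M := by
        convert M.sub_mem hx hz using 1
        ring
      have : (1 - (x ^ 2 - x) * y) + (x - 1) * (x * y) ∈ M :=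
        M.add_mem hz (M.mul_mem_right _ h3)
      convert this using 1
      ring
  · exact ⟨1, h1, hz⟩

theorem fip {R : Subring S} (hS : {M : Ideal S | M.IsMaximal}.Finite) (h : R.IsSLExt) :
    {T : Subring S | R ≤ T}.Finite := by
  have : Finite {M : Ideal S | M.IsMaximal} := hS
  let φ : S → Set {M : Ideal S | M.IsMaximal} := fun s => {M | s ∈ M.1}
  have hφ : ∀ s t, φ s = φ t → s - t ∈ R := by
    intro s t hst
    refine key hS h _ fun M hM => ?_
    have h1 : (1 : S) ∉ M := fun h => hM.ne_top ((Ideal.eq_top_iff_one M).2 h)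
    have h2 : s ∈ M ↔ t ∈ M := by
      have := Set.ext_iff.1 hst ⟨M, hM⟩
      exact this
    by_cases hs : s ∈ M
    · refine ⟨1, h1, fun h3 => h1 ?_⟩
      have := M.add_mem h3 (M.sub_mem hs (h2.1 hs))
      simpa using this
    · refine ⟨s, hs, ?_⟩
      have : s - (s - t) = t := by ring
      rw [this]
      exact fun ht => hs (h2.2 ht)
  have aux : ∀ T T' : Subring S, R ≤ T' → φ '' T ⊆ φ '' T' → T ≤ T' := by
    intro T T' hR hsub t ht
    obtain ⟨t', ht', e⟩ := hsub ⟨t, ht, rfl⟩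
    have := T'.add_mem (hR (hφ t t' e.symm)) ht'
    simpa using this
  refine Set.Finite.of_finite_image (f := fun T : Subring S => φ '' (T : Set S))
    (Set.toFinite _) ?_
  intro T hT T' hT' e
  exact le_antisymm (aux T T' hT' (le_of_eq e)) (aux T' T hT (le_of_eq e.symm))

theorem seminormal_pow {R : Subring S} (hs : ∀ b : S, b ^ 2 ∈ R → b ^ 3 ∈ R → b ∈ R) (b : S)
    (n : ℕ) (h : ∀ k, n ≤ k → b ^ k ∈ R) : b ∈ R := by
  induction n with
  | zero => simpa using h 1 (by omega)
  | succ n ih =>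
    rcases Nat.eq_zero_or_pos n with rfl | hn
    · simpa using h 1 (by omega)
    refine ih fun k hk => ?_
    refine hs _ ?_ ?_
    · rw [← pow_mul]
      exact h _ (by omega)
    · rw [← pow_mul]
      exact h _ (by omega)

/-- The ring `R + z ^ n A`. -/
def tower (R A : Subring S) (hRA : R ≤ A) (z : S) (hz : z ∈ A) (n : ℕ) : Subring S where
  carrier := {t | ∃ r ∈ R, ∃ a ∈ A, t = r + z ^ n * a}
  mul_mem' := by
    rintro _ _ ⟨r, hr, a, ha, rfl⟩ ⟨r', hr', a', ha', rfl⟩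
    refine ⟨r * r', R.mul_mem hr hr', r * a' + r' * a + z ^ n * a * a', ?_, by ring⟩
    exact A.add_mem (A.add_mem (A.mul_mem (hRA hr) ha') (A.mul_mem (hRA hr') ha))
      (A.mul_mem (A.mul_mem (A.pow_mem hz n) ha) ha')
  one_mem' := ⟨1, R.one_mem, 0, A.zero_mem, by ring⟩
  add_mem' := by
    rintro _ _ ⟨r, hr, a, ha, rfl⟩ ⟨r', hr', a', ha', rfl⟩
    exact ⟨r + r', R.add_mem hr hr', a + a', A.add_mem ha ha', by ring⟩
  zero_mem' := ⟨0, R.zero_mem, 0, A.zero_mem, by ring⟩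
  neg_mem' := by
    rintro _ ⟨r, hr, a, ha, rfl⟩
    exact ⟨-r, R.neg_mem hr, -a, A.neg_mem ha, by ring⟩

theorem exists_smul {R : Subring S} (hi : ∀ x : S, IsIntegral R x)
    (hs : ∀ b : S, b ^ 2 ∈ R → b ^ 3 ∈ R → b ∈ R)
    (hf : {T : Subring S | R ≤ T}.Finite) (M : Ideal R) (hM : M.IsMaximal) (z : S)
    (hz : ∀ Q : Ideal S, Q.IsPrime → Q.comap R.subtype = M → z ∈ Q) :
    ∃ u : R, u ∉ M ∧ (u : S) * z ∈ R := by
  let A : Subalgebra R S := Algebra.adjoin R {z}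
  have hzA : z ∈ A := Algebra.self_mem_adjoin_singleton R z
  have hfin : Module.Finite R A := Module.Finite.iff_fg.2 (hi z).fg_adjoin_singleton
  have hRA : R ≤ A.toSubring := fun r hr => A.algebraMap_mem ⟨r, hr⟩
  have hint : Algebra.IsIntegral R S := ⟨hi⟩
  have hint' : Algebra.IsIntegral A S := Algebra.IsIntegral.tower_top R
  have hrad : (⟨z, hzA⟩ : A) ∈ (M.map (algebraMap R A)).radical := by
    rw [Ideal.radical_eq_sInf, Ideal.mem_sInf]
    rintro P ⟨hP, hPp⟩
    obtain ⟨Q, -, hQ, hQP⟩ := Ideal.exists_ideal_over_prime_of_isIntegral (S := S) P ⊥ (by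
      intro a ha
      have : (a : S) = 0 := by simpa using ha
      have : a = 0 := Subtype.ext this
      rw [this]
      exact P.zero_mem)
    have h1 : M ≤ Q.comap R.subtype := by
      intro m hm
      have h2 : algebraMap R A m ∈ Q.comap (algebraMap A S) := by
        rw [hQP]
        exact hP (Ideal.mem_map_of_mem _ hm)
      exact h2
    have h2 : Q.comap R.subtype = M := by
      have : (Q.comap R.subtype).IsPrime := inferInstance
      exact (hM.eq_of_le this.ne_top h1).symm
    have h3 := hz Q hQ h2
    rw [← hQP]
    exact h3
  obtain ⟨k, hk⟩ := hrad
  obtain ⟨i, j, hij, e⟩ : ∃ i j : ℕ, i < j ∧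
      tower R A.toSubring hRA z hzA (k * i) = tower R A.toSubring hRA z hzA (k * j) := by
    have : Finite {T : Subring S | R ≤ T} := hf
    let F : ℕ → {T : Subring S | R ≤ T} := fun i => ⟨tower R A.toSubring hRA z hzA (k * i),
      fun r hr => ⟨r, hr, 0, Subring.zero_mem _, by ring⟩⟩
    obtain ⟨i, j, hne, e⟩ := Finite.exists_ne_map_eq_of_infinite F
    rcases lt_or_gt_of_ne hne with h | h
    · exact ⟨i, j, h, congrArg Subtype.val e⟩
    · exact ⟨j, i, h, (congrArg Subtype.val e).symm⟩
  let B : Submodule R S := LinearMap.range (Algebra.linearMap R S)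
  have hB : ∀ s : S, s ∈ B ↔ s ∈ R := by
    intro s
    constructor
    · rintro ⟨r, rfl⟩
      exact r.2
    · intro h
      exact ⟨⟨s, h⟩, rfl⟩
  let f : A →ₗ[R] S ⧸ B := B.mkQ ∘ₗ (LinearMap.mulLeft R (z ^ (k * i))) ∘ₗ A.val.toLinearMap
  have hfa : ∀ a : A, f a = B.mkQ (z ^ (k * i) * a) := fun a => rfl
  obtain ⟨u, hu1, hu2⟩ := Submodule.exists_sub_one_mem_and_smul_eq_zero_of_fg_of_le_smul M
    ((⊤ : Submodule R A).map f) (hfin.fg_top.map f) (by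
      rintro _ ⟨a, -, rfl⟩
      rw [← Submodule.map_smul'']
      have hmem : z ^ (k * i) * (a : S) ∈ tower R A.toSubring hRA z hzA (k * i) :=
        ⟨0, R.zero_mem, a, a.2, by ring⟩
      rw [e] at hmem
      obtain ⟨r, hr, a', ha', e'⟩ := hmem
      obtain ⟨d, rfl⟩ : ∃ d, j = i + 1 + d := ⟨j - (i + 1), by omega⟩
      let c : A := (⟨z, hzA⟩ : A) ^ k * ((⟨z, hzA⟩ : A) ^ (k * d) * ⟨a', ha'⟩)
      refine ⟨c, ?_, ?_⟩
      · rw [Ideal.smul_top_eq_map]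
        exact Ideal.mul_mem_right _ _ hk
      · rw [hfa, hfa, e', Submodule.mkQ_apply, Submodule.mkQ_apply, Submodule.Quotient.eq, hB]
        have : z ^ (k * i) * (c : S) - (r + z ^ (k * (i + 1 + d)) * a') = -r := by
          have hc : (c : S) = z ^ k * (z ^ (k * d) * a') := rfl
          rw [hc]
          ring
        rw [this]
        exact R.neg_mem hr)
  have huM : u ∉ M := by
    intro h
    have := M.sub_mem h hu1
    apply hM.ne_top
    rw [Ideal.eq_top_iff_one]
    simpa using this
  have hua : ∀ a ∈ A, (u : S) * (z ^ (k * i) * a) ∈ R := by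
    intro a ha
    have := hu2 (f ⟨a, ha⟩) ⟨⟨a, ha⟩, trivial, rfl⟩
    rw [hfa, ← map_smul, Submodule.mkQ_apply, Submodule.Quotient.mk_eq_zero, hB] at this
    exact this
  refine ⟨u, huM, seminormal_pow hs _ (k * i + 1) fun l hl => ?_⟩
  obtain ⟨d, rfl⟩ : ∃ d, l = k * i + d + 1 := ⟨l - (k * i + 1), by omega⟩
  have h1 := R.mul_mem (R.pow_mem u.2 (k * i + d)) (hua (z ^ (d + 1)) (A.pow_mem hzA _))
  convert h1 using 1
  ring

theorem card_two {K : Type*} [Ring K] [Nontrivial K] (h : Nat.card K = 2) (b : K) (hb : b ≠ 0) :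
    b = 1 := by
  obtain ⟨y, _, hy2⟩ := (Nat.card_eq_two_iff' (0 : K)).1 h
  exact (hy2 b hb).trans (hy2 1 one_ne_zero).symm

theorem backward {R : Subring S} (hi : ∀ x : S, IsIntegral R x)
    (hs : ∀ b : S, b ^ 2 ∈ R → b ^ 3 ∈ R → b ∈ R)
    (hinf : ∀ Q : Ideal S, Q.IsPrime → ∀ s : S ⧸ Q,
        ∃ a b : ↥R ⧸ Q.comap R.subtype, b ≠ 0 ∧
          Ideal.quotientMap Q R.subtype le_rfl b * s = Ideal.quotientMap Q R.subtype le_rfl a)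
    (hf : {T : Subring S | R ≤ T}.Finite)
    (h2 : ∀ M : Ideal ↥R, M.IsMaximal →
        (∃ s : S, ∀ u : ↥R, u ∉ M → (u : S) * s ∉ R) → Nat.card (↥R ⧸ M) = 2)
    (x y : S) (hxy : x * y = 1) : x ∈ R := by
  let D : Ideal R :=
    { carrier := {u | (u : S) * x ∈ R}
      add_mem' := by
        intro a b ha hb
        have := R.add_mem ha hb
        simpa [add_mul] using this
      zero_mem' := by simp
      smul_mem' := by
        intro c a ha
        have := R.mul_mem c.2 ha
        simpa [mul_assoc] using this }
  by_contra hx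
  have hD : D ≠ ⊤ := by
    intro h
    have : (1 : R) ∈ D := by rw [h]; trivial
    have h1 : ((1 : R) : S) * x ∈ R := this
    simp at h1
    exact hx h1
  obtain ⟨M, hM, hDM⟩ := Ideal.exists_le_maximal D hD
  have hcard := h2 M hM ⟨x, fun u hu hux => hu (hDM hux)⟩
  obtain ⟨u, hu, hux⟩ := exists_smul hi hs hf M hM (x - 1) (by
    intro Q hQ hQM
    subst hQM
    obtain ⟨a, b, hb, e⟩ := hinf Q hQ (Ideal.Quotient.mk Q x)
    have : Nontrivial (↥R ⧸ Q.comap R.subtype) := Ideal.Quotient.nontrivial_iff.2 hM.ne_top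
    rw [card_two hcard b hb, map_one, one_mul] at e
    by_cases ha : a = 0
    · exfalso
      rw [ha, map_zero, Ideal.Quotient.eq_zero_iff_mem] at e
      apply hQ.ne_top
      rw [Ideal.eq_top_iff_one, ← hxy]
      exact Q.mul_mem_right _ e
    · rw [card_two hcard a ha, map_one, ← map_one (Ideal.Quotient.mk Q),
        Ideal.Quotient.eq] at e
      exact e)
  refine hu (hDM ?_)
  have := R.add_mem hux u.2
  change (u : S) * x ∈ R
  convert this using 1
  ring

end SLAux

theorem SL_characterization_semilocal {S : Type*} [CommRing S] (R : Subring S)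
    (hS : {M : Ideal S | M.IsMaximal}.Finite) :
    R.IsSLExt ↔
      -- `R ⊆ S` is integral
      ((∀ x : S, IsIntegral R x) ∧
      -- `R ⊆ S` is seminormal
      (∀ b : S, b ^ 2 ∈ R → b ^ 3 ∈ R → b ∈ R) ∧
      -- `R ⊆ S` is infra-integral: all residual field extensions
      -- `κ_R(Q ∩ R) → κ_S(Q)` are isomorphisms; equivalently (the field maps being
      -- injective) every element of `Frac(S/Q)` is a fraction of elements of `R/(Q ∩ R)`
      (∀ Q : Ideal S, Q.IsPrime → ∀ s : S ⧸ Q,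
        ∃ a b : ↥R ⧸ Q.comap R.subtype, b ≠ 0 ∧
          Ideal.quotientMap Q R.subtype le_rfl b * s = Ideal.quotientMap Q R.subtype le_rfl a) ∧
      -- the extension has FIP: finitely many intermediate rings
      {T : Subring S | R ≤ T}.Finite ∧
      -- for every maximal ideal `M ∈ MSupp(S/R)`, i.e. with `R_M ≠ S_M`,
      -- the residue field `R/M` has exactly two elements (`R/M ≅ ℤ/2ℤ`)
      (∀ M : Ideal ↥R, M.IsMaximal →
        (∃ s : S, ∀ u : ↥R, u ∉ M → (u : S) * s ∉ R) →
        Nat.card (↥R ⧸ M) = 2)) := by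
  constructor
  · intro h
    have hb := SLAux.boolean hS h
    have hb1 : ∀ x : S, x ^ 2 - x ∈ R := fun x => by simpa using hb x 1
    refine ⟨?_, ?_, ?_, SLAux.fip hS h, ?_⟩
    · intro x
      refine ⟨Polynomial.X ^ 2 - Polynomial.X - Polynomial.C ⟨_, hb1 x⟩, ?_, ?_⟩
      · rw [sub_sub]
        refine Polynomial.monic_X_pow_sub (n := 2) ?_
        exact lt_of_le_of_lt ((Polynomial.degree_add_le _ _).trans (max_le Polynomial.degree_X_le
          (Polynomial.degree_C_le.trans zero_le_one))) (by norm_num)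
      · have : algebraMap R S ⟨_, hb1 x⟩ = x ^ 2 - x := rfl
        simp [this]
    · intro b h2 _
      have := R.sub_mem h2 (hb1 b)
      simpa using this
    · intro Q hQ s
      obtain ⟨s, rfl⟩ := Ideal.Quotient.mk_surjective s
      by_cases hI : ∃ j : S, (∀ y, j * y ∈ R) ∧ j ∉ Q
      · obtain ⟨j, hj, hjQ⟩ := hI
        refine ⟨Ideal.Quotient.mk _ ⟨j * s, hj s⟩,
          Ideal.Quotient.mk _ ⟨j, by simpa using hj 1⟩, ?_, ?_⟩
        · rw [Ne, Ideal.Quotient.eq_zero_iff_mem]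
          exact hjQ
        · rw [Ideal.quotientMap_mk, Ideal.quotientMap_mk, ← map_mul]
          rfl
      · push Not at hI
        have h1 := hI _ (hb s)
        have h2 : s * (s - 1) ∈ Q := by
          convert h1 using 1
          ring
        have hn : (1 : ↥R ⧸ Q.comap R.subtype) ≠ 0 := by
          have : (Q.comap R.subtype).IsPrime := inferInstance
          have : Nontrivial (↥R ⧸ Q.comap R.subtype) := Ideal.Quotient.nontrivial_iff.2 this.ne_top
          exact one_ne_zero
        rcases hQ.mem_or_mem h2 with h3 | h3
        · refine ⟨0, 1, hn, ?_⟩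
          rw [map_one, one_mul, map_zero, Ideal.Quotient.eq_zero_iff_mem]
          exact h3
        · refine ⟨1, 1, hn, ?_⟩
          rw [map_one, one_mul, ← map_one (Ideal.Quotient.mk Q), Ideal.Quotient.eq]
          exact h3
    · rintro M hM ⟨s, hs⟩
      have : Nontrivial (↥R ⧸ M) := Ideal.Quotient.nontrivial_iff.2 hM.ne_top
      rw [Nat.card_eq_two_iff' (0 : ↥R ⧸ M)]
      refine ⟨1, one_ne_zero, ?_⟩
      intro r hr
      obtain ⟨r, rfl⟩ := Ideal.Quotient.mk_surjective r
      rw [Ne, Ideal.Quotient.eq_zero_iff_mem] at hr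
      rw [← map_one (Ideal.Quotient.mk M), Ideal.Quotient.eq]
      have h1 : r ^ 2 - r ∈ M := by
        by_contra h2
        exact hs _ h2 (by simpa using hb r s)
      have h2 : r * (r - 1) ∈ M := by
        convert h1 using 1
        ring
      exact (hM.isPrime.mem_or_mem h2).resolve_left hr
  · rintro ⟨hi, hs, hinf, hf, h2⟩ x y hxy
    exact ⟨SLAux.backward hi hs hinf hf h2 x y hxy,
      SLAux.backward hi hs hinf hf h2 y x (by rw [mul_comm, hxy])⟩
end

section
/- Let R ⊆ S be an FCP extension of commutative rings (every chain of intermediate rings between R and S is finite) with S semilocal (S has only finitely many maximal ideals). Then there exists a greatest intermediate ring T with R ⊆ T ⊆ S such that R ⊆ T is strongly local; that is, R ⊆ T is strongly local and every intermediate ring V with R ⊆ V ⊆ S for which R ⊆ V is strongly local satisfies V ⊆ T. -/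
/-- For subrings `R ≤ T` of `S`, the extension `R ⊆ T` is *strongly local* if
`U(R) = U(T)`: every unit of `T` lies in `R` together with its inverse. -/
def Subring.IsSLWithin {S : Type*} [CommRing S] (R T : Subring S) : Prop :=
  ∀ x y : S, x ∈ T → y ∈ T → x * y = 1 → x ∈ R ∧ y ∈ R

theorem SLaux_T {S : Type*} [CommRing S] (R : Subring S) (J : AddSubgroup S)
    (hJR : ∀ j ∈ J, j ∈ R) (hRJ : ∀ r ∈ R, ∀ j ∈ J, r * j ∈ J) :
    ∃ T : Subring S, R ≤ T ∧ R.IsSLWithin T ∧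
      ∀ x : S, x ∈ T ↔ ∃ r ∈ R, ∃ b : S, x = r + b ∧ (∀ j ∈ J, b * j ∈ J) ∧ b ^ 2 - b ∈ J ∧
        ∀ s ∈ R, (s ^ 2 - s) * b ∈ J := by
  have two : ∀ b : S, (∀ s ∈ R, (s ^ 2 - s) * b ∈ J) → 2 * b ∈ J := by
    intro b h
    have := h 2 (by simpa using R.natCast_mem 2)
    convert this using 1
    ring
  let T : Subring S :=
    { carrier := {x | ∃ r ∈ R, ∃ b : S, x = r + b ∧ (∀ j ∈ J, b * j ∈ J) ∧ b ^ 2 - b ∈ J ∧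
        ∀ s ∈ R, (s ^ 2 - s) * b ∈ J}
      zero_mem' := ⟨0, R.zero_mem, 0, by simp, by simp [J.zero_mem], by simp [J.zero_mem],
        by simp [J.zero_mem]⟩
      one_mem' := ⟨1, R.one_mem, 0, by simp, by simp [J.zero_mem], by simp [J.zero_mem],
        by simp [J.zero_mem]⟩
      add_mem' := by
        rintro _ _ ⟨r, hr, b, rfl, h1, h2, h3⟩ ⟨r', hr', b', rfl, h1', h2', h3'⟩
        refine ⟨r + r', R.add_mem hr hr', b + b', by ring, ?_, ?_, ?_⟩
        · intro j hj
          rw [add_mul]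
          exact J.add_mem (h1 j hj) (h1' j hj)
        · have := J.add_mem (J.add_mem h2 h2') (h1 _ (two b' h3'))
          convert this using 1
          ring
        · intro s hs
          rw [mul_add]
          exact J.add_mem (h3 s hs) (h3' s hs)
      neg_mem' := by
        rintro _ ⟨r, hr, b, rfl, h1, h2, h3⟩
        refine ⟨-r, R.neg_mem hr, -b, by ring, ?_, ?_, ?_⟩
        · intro j hj
          rw [neg_mul]
          exact J.neg_mem (h1 j hj)
        · have := J.add_mem h2 (two b h3)
          convert this using 1
          ring
        · intro s hs
          rw [mul_neg]
          exact J.neg_mem (h3 s hs)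
      mul_mem' := by
        rintro _ _ ⟨r, hr, b, rfl, h1, h2, h3⟩ ⟨r', hr', b', rfl, h1', h2', h3'⟩
        refine ⟨r * r', R.mul_mem hr hr', r * b' + r' * b + b * b', by ring, ?_, ?_, ?_⟩
        · intro j hj
          have := J.add_mem (J.add_mem (hRJ r hr _ (h1' j hj)) (hRJ r' hr' _ (h1 j hj)))
            (h1 _ (h1' j hj))
          convert this using 1
          ring
        · have e1 : (r * b') ^ 2 - r * b' ∈ J := by
            have := J.add_mem (hRJ _ (R.pow_mem hr 2) _ h2') (h3' r hr)
            convert this using 1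
            ring
          have e2 : (r' * b) ^ 2 - r' * b ∈ J := by
            have := J.add_mem (hRJ _ (R.pow_mem hr' 2) _ h2) (h3 r' hr')
            convert this using 1
            ring
          have e3 : (b * b') ^ 2 - b * b' ∈ J := by
            have := J.add_mem (h1 _ (h1 _ h2')) (h1' _ h2)
            convert this using 1
            ring
          have e4 : (2 * b) * (r * r' * b' + b * r + 0) ∈ J := by
            have := J.add_mem (hRJ _ (R.mul_mem hr hr') _ (h1' _ (two b h3)))
              (hRJ _ hr _ (h1 _ (two b h3)))
            convert this using 1
            ring
          have e5 : (r * r') * (b' * (2 * b)) ∈ J := hRJ _ (R.mul_mem hr hr') _ (h1' _ (two b h3))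
          have e6 : r * (b' * (b' * (2 * b))) ∈ J := hRJ _ hr _ (h1' _ (h1' _ (two b h3)))
          have e7 : r' * (b' * (b * (2 * b))) ∈ J := hRJ _ hr' _ (h1' _ (h1 _ (two b h3)))
          have := J.add_mem (J.add_mem (J.add_mem (J.add_mem (J.add_mem e1 e2) e3) e5) e6) e7
          convert this using 1
          ring
        · intro s hs
          have := J.add_mem (J.add_mem (hRJ r hr _ (h3' s hs)) (hRJ r' hr' _ (h3 s hs)))
            (h1 _ (h3' s hs))
          convert this using 1
          ring }
  have key : ∀ x y : S, x ∈ T → y ∈ T → x * y = 1 → x ∈ R := by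
    intro x y hx hy hxy
    have hTJ : ∀ t ∈ T, ∀ j ∈ J, t * j ∈ J := by
      rintro _ ⟨r, hr, b, rfl, h1, h2, h3⟩ j hj
      rw [add_mul]
      exact J.add_mem (hRJ r hr j hj) (h1 j hj)
    have hT := hTJ y hy
    obtain ⟨r, hr, b, rfl, h1, h2, h3⟩ := hx
    obtain ⟨r', hr', b', rfl, h1', h2', h3'⟩ := hy
    have q1 : (r' + b') * (2 * b * r + (b ^ 2 - b)) ∈ J := by
      refine hT _ (J.add_mem ?_ h2)
      rw [mul_comm]
      exact hRJ r hr _ (two b h3)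
    have q2 := h3' r hr
    have : r + b = 1 + r' * (r ^ 2 - r) + ((r ^ 2 - r) * b' +
        (r' + b') * (2 * b * r + (b ^ 2 - b))) := by
      linear_combination (1 - (r + b)) * hxy
    rw [this]
    exact R.add_mem (R.add_mem R.one_mem (R.mul_mem hr' (R.sub_mem (R.pow_mem hr 2) hr)))
      (hJR _ (J.add_mem q2 q1))
  refine ⟨T, ?_, ?_, fun x => Iff.rfl⟩
  · intro r hr
    exact ⟨r, hr, 0, by simp, by simp [J.zero_mem], by simp [J.zero_mem], by simp [J.zero_mem]⟩
  · intro x y hx hy hxy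
    exact ⟨key x y hx hy hxy, key y x hy hx (by rw [mul_comm]; exact hxy)⟩

theorem SLaux_min {S : Type*} [CommRing S] (A B : Subring S) (hAB : A ⋖ B)
    (M M' : Ideal A) (hM : M.IsMaximal) (hM' : M'.IsMaximal) (hne : M ≠ M')
    (h : M.map (Subring.inclusion hAB.le) = ⊤) (h' : M'.map (Subring.inclusion hAB.le) = ⊤) :
    False := by
  have hle : A ≤ B := hAB.le
  obtain ⟨m, hmM, hmM'⟩ : ∃ m ∈ M, m ∉ M' := by
    by_contra hc
    push Not at hc
    exact hne (hM.eq_of_le hM'.ne_top hc)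
  -- saturation
  let C : Subring S :=
    { carrier := {b | b ∈ B ∧ ∃ s : A, s ∉ M' ∧ (s : S) * b ∈ A}
      zero_mem' := ⟨B.zero_mem, 1, fun h1 => hM'.ne_top ((Ideal.eq_top_iff_one _).2 h1), by simp⟩
      one_mem' := ⟨B.one_mem, 1, fun h1 => hM'.ne_top ((Ideal.eq_top_iff_one _).2 h1), by simp⟩
      add_mem' := by
        rintro x y ⟨hx, s, hs, hsx⟩ ⟨hy, t, ht, hty⟩
        refine ⟨B.add_mem hx hy, s * t, fun hh => (hM'.isPrime.mem_or_mem hh).elim hs ht, ?_⟩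
        have := A.add_mem (A.mul_mem t.2 hsx) (A.mul_mem s.2 hty)
        convert this using 1
        push_cast
        ring
      neg_mem' := by
        rintro x ⟨hx, s, hs, hsx⟩
        refine ⟨B.neg_mem hx, s, hs, ?_⟩
        rw [mul_neg]
        exact A.neg_mem hsx
      mul_mem' := by
        rintro x y ⟨hx, s, hs, hsx⟩ ⟨hy, t, ht, hty⟩
        refine ⟨B.mul_mem hx hy, s * t, fun hh => (hM'.isPrime.mem_or_mem hh).elim hs ht, ?_⟩
        have := A.mul_mem hsx hty
        convert this using 1
        push_cast
        ring }
  have hAC : A ≤ C := fun a ha => ⟨hle ha, 1, fun h1 => hM'.ne_top ((Ideal.eq_top_iff_one _).2 h1),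
    by simpa using ha⟩
  have hCB : C ≤ B := fun a ha => ha.1
  have hCne : C ≠ B := by
    intro hCB'
    have cl : ∀ y ∈ M'.map (Subring.inclusion hAB.le), ∃ s : A, s ∉ M' ∧ ∃ μ ∈ M',
        (s : S) * (y : S) = (μ : S) := by
      intro y hy
      refine Submodule.span_induction ?_ ?_ ?_ ?_ hy
      · rintro _ ⟨a, ha, rfl⟩
        exact ⟨1, fun h1 => hM'.ne_top ((Ideal.eq_top_iff_one _).2 h1), a, ha, by simp⟩
      · exact ⟨1, fun h1 => hM'.ne_top ((Ideal.eq_top_iff_one _).2 h1), 0, M'.zero_mem, by simp⟩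
      · rintro x y _ _ ⟨s, hs, μ, hμ, e⟩ ⟨t, ht, ν, hν, e'⟩
        refine ⟨s * t, fun hh => (hM'.isPrime.mem_or_mem hh).elim hs ht, t * μ + s * ν,
          M'.add_mem (M'.mul_mem_left _ hμ) (M'.mul_mem_left _ hν), ?_⟩
        push_cast
        rw [← e, ← e']
        ring
      · rintro b x _ ⟨s, hs, μ, hμ, e⟩
        have hb : (b : S) ∈ C := by rw [hCB']; exact b.2
        obtain ⟨_, t, ht, htb⟩ := hb
        refine ⟨s * t, fun hh => (hM'.isPrime.mem_or_mem hh).elim hs ht, ⟨_, htb⟩ * μ,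
          M'.mul_mem_left _ hμ, ?_⟩
        simp only [smul_eq_mul]
        push_cast
        rw [← e]
        ring
    obtain ⟨s, hs, μ, hμ, e⟩ := cl 1 (by rw [h']; trivial)
    apply hs
    have : s = μ := by
      apply Subtype.ext
      simpa using e
    rw [this]
    exact hμ
  have hCA : C = A := by
    by_contra hc
    exact hAB.2 (lt_of_le_of_ne hAC (Ne.symm hc)) (lt_of_le_of_ne hCB hCne)
  have inj : ∀ b ∈ B, (m : S) * b ∈ A → b ∈ A := by
    intro b hb hmb
    rw [← hCA]
    exact ⟨hb, m, hmM', hmb⟩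
  let D : Subring S :=
    { carrier := {x | ∃ a ∈ A, ∃ b ∈ B, x = a + m * b}
      zero_mem' := ⟨0, A.zero_mem, 0, B.zero_mem, by simp⟩
      one_mem' := ⟨1, A.one_mem, 0, B.zero_mem, by simp⟩
      add_mem' := by
        rintro _ _ ⟨a, ha, b, hb, rfl⟩ ⟨a', ha', b', hb', rfl⟩
        exact ⟨a + a', A.add_mem ha ha', b + b', B.add_mem hb hb', by ring⟩
      neg_mem' := by
        rintro _ ⟨a, ha, b, hb, rfl⟩
        exact ⟨-a, A.neg_mem ha, -b, B.neg_mem hb, by ring⟩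
      mul_mem' := by
        rintro _ _ ⟨a, ha, b, hb, rfl⟩ ⟨a', ha', b', hb', rfl⟩
        exact ⟨a * a', A.mul_mem ha ha', a * b' + b * a' + m * b * b',
          B.add_mem (B.add_mem (B.mul_mem (hle ha) hb') (B.mul_mem hb (hle ha')))
            (B.mul_mem (B.mul_mem (hle m.2) hb) hb'), by ring⟩ }
  have hAD : A ≤ D := fun a ha => ⟨a, ha, 0, B.zero_mem, by simp⟩
  have hDB : D ≤ B := by
    rintro _ ⟨a, ha, b, hb, rfl⟩
    exact B.add_mem (hle ha) (B.mul_mem (hle m.2) hb)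
  have hDne : D ≠ A := by
    intro hD
    apply hAB.1.not_ge
    intro b hb
    refine inj b hb ?_
    have hm : (m : S) * b ∈ D := ⟨0, A.zero_mem, b, hb, by simp⟩
    exact hD.le hm
  have hD : D = B := by
    by_contra hc
    exact hAB.2 (lt_of_le_of_ne hAD (Ne.symm hDne)) (lt_of_le_of_ne hDB hc)
  have cl : ∀ y ∈ M.map (Subring.inclusion hAB.le), ∃ μ ∈ M, ∃ c ∈ B,
      (y : S) = (μ : S) + m * c := by
    intro y hy
    refine Submodule.span_induction ?_ ?_ ?_ ?_ hy
    · rintro _ ⟨a, ha, rfl⟩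
      exact ⟨a, ha, 0, B.zero_mem, by simp⟩
    · exact ⟨0, M.zero_mem, 0, B.zero_mem, by simp⟩
    · rintro x y _ _ ⟨μ, hμ, c, hc, e⟩ ⟨ν, hν, d, hd, e'⟩
      refine ⟨μ + ν, M.add_mem hμ hν, c + d, B.add_mem hc hd, ?_⟩
      push_cast
      rw [e, e']
      ring
    · rintro b x _ ⟨μ, hμ, c, hc, e⟩
      have hb : (b : S) ∈ D := by rw [hD]; exact b.2
      obtain ⟨a, ha, d, hd, e'⟩ := hb
      refine ⟨⟨a, ha⟩ * μ, M.mul_mem_left _ hμ, d * μ + b * c,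
        B.add_mem (B.mul_mem hd (hle μ.2)) (B.mul_mem b.2 hc), ?_⟩
      simp only [smul_eq_mul]
      push_cast
      rw [e]
      linear_combination (μ : S) * e'
  obtain ⟨μ, hμ, c, hc, e⟩ := cl 1 (by rw [h]; trivial)
  have hcA : c ∈ A := by
    apply inj c hc
    have : (m : S) * c = 1 - μ := by
      have e2 : (1 : S) = μ + m * c := by simpa using e
      linear_combination -e2
    rw [this]
    exact A.sub_mem A.one_mem μ.2
  apply hM.ne_top
  rw [Ideal.eq_top_iff_one]
  have : (1 : A) = μ + m * ⟨c, hcA⟩ := by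
    apply Subtype.ext
    simpa using e
  rw [this]
  exact M.add_mem hμ (M.mul_mem_right _ hmM)

theorem SLaux_step {S : Type*} [CommRing S] (A B : Subring S) (hAB : A ⋖ B)
    (hB : {M : Ideal B | M.IsMaximal}.Finite) : {M : Ideal A | M.IsMaximal}.Finite := by
  let f := Subring.inclusion hAB.le
  have h1 : {M : Ideal A | M.IsMaximal ∧ M.map f = ⊤}.Finite := by
    apply Set.Subsingleton.finite
    rintro M ⟨hM, h⟩ M' ⟨hM', h'⟩
    by_contra hne
    exact SLaux_min A B hAB M M' hM hM' hne h h'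
  refine (h1.union (hB.image (Ideal.comap f))).subset ?_
  intro M hM
  by_cases h : M.map f = ⊤
  · exact Or.inl ⟨hM, h⟩
  · right
    obtain ⟨N, hN, hle⟩ := Ideal.exists_le_maximal _ h
    refine ⟨N, hN, ?_⟩
    have h2 : M ≤ N.comap f := Ideal.map_le_iff_le_comap.1 hle
    exact ((show M.IsMaximal from hM).eq_of_le (Ideal.comap_ne_top f hN.ne_top) h2).symm

theorem SLaux_semilocal {S : Type*} [CommRing S] (R : Subring S)
    (hFCP : ∀ C : Set (Subring S), (∀ T ∈ C, R ≤ T) → IsChain (· ≤ ·) C → C.Finite)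
    (hS : {M : Ideal S | M.IsMaximal}.Finite) (V : Subring S) (hV : R ≤ V) :
    {M : Ideal V | M.IsMaximal}.Finite := by
  have gt : WellFoundedGT (Set.Ici R) := by
    refine ⟨wellFounded_iff_isEmpty_descending_chain.2 ⟨fun ⟨f, hf⟩ => ?_⟩⟩
    have hm : StrictMono f := strictMono_nat_of_lt_succ hf
    have hm' : StrictMono (fun n => (f n).1) := hm
    refine Set.infinite_range_of_injective hm'.injective (hFCP _ ?_ hm'.monotone.isChain_range)
    rintro _ ⟨n, rfl⟩
    exact (f n).2
  have lt : WellFoundedLT (Set.Ici R) := by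
    refine ⟨wellFounded_iff_isEmpty_descending_chain.2 ⟨fun ⟨f, hf⟩ => ?_⟩⟩
    have hm : StrictAnti f := strictAnti_nat_of_succ_lt hf
    have hm' : StrictAnti (fun n => (f n).1) := hm
    refine Set.infinite_range_of_injective hm'.injective (hFCP _ ?_ ?_)
    · rintro _ ⟨n, rfl⟩
      exact (f n).2
    · rintro _ ⟨n, rfl⟩ _ ⟨k, rfl⟩ _
      rcases le_total n k with h | h
      · exact Or.inr (hm'.antitone h)
      · exact Or.inl (hm'.antitone h)
  suffices H : ∀ W : Set.Ici R, {M : Ideal W.1 | M.IsMaximal}.Finite from H ⟨V, hV⟩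
  intro W
  induction W using WellFoundedGT.induction with
  | ind W ih =>
  by_cases hW : W = ⊤
  · subst hW
    let e : (⊤ : Subring S) ≃+* S := Subring.topEquiv
    refine (hS.image (Ideal.comap (e : (⊤ : Subring S) →+* S))).subset ?_
    intro M hM
    have hM : M.IsMaximal := hM
    refine ⟨Ideal.comap (e.symm : S →+* (⊤ : Subring S)) M,
      Ideal.comap_isMaximal_of_surjective _ e.symm.surjective, ?_⟩
    ext x
    simp [Ideal.mem_comap]
  · obtain ⟨B, hB, -⟩ := exists_covBy_le_of_lt (lt_top_iff_ne_top.2 hW)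
    refine SLaux_step W.1 B.1 ⟨hB.1, ?_⟩ (ih B hB.1)
    intro C hC hC'
    exact hB.2 (c := ⟨C, W.2.trans hC.le⟩) hC hC'

theorem SLaux_le {S : Type*} [CommRing S] (R V : Subring S) (hRV : R ≤ V)
    (hSL : R.IsSLWithin V) (hfin : {M : Ideal V | M.IsMaximal}.Finite)
    (J : AddSubgroup S)
    (hJ : ∀ x, x ∈ J ↔ x ∈ R ∧ ∀ r ∈ R, ∃ y ∈ R, (x * r + 1) * y = 1) (v : V) :
    ∃ r ∈ R, ∃ b : S, (v : S) = r + b ∧ (∀ j ∈ J, b * j ∈ J) ∧ b ^ 2 - b ∈ J ∧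
        ∀ s ∈ R, (s ^ 2 - s) * b ∈ J := by
  classical
  -- elements of all maximal ideals of `V` are in `J`
  have unit : ∀ x : V, (∀ M : Ideal V, M.IsMaximal → x ∉ M) → (x : S) ∈ R ∧ ∃ y ∈ R,
      (x : S) * y = 1 := by
    intro x hx
    have : IsUnit x := by
      by_contra hc
      obtain ⟨M, hM, hxM⟩ := exists_max_ideal_of_mem_nonunits hc
      exact hx M hM hxM
    obtain ⟨y, hy⟩ := this.exists_right_inv
    have hy' : (x : S) * y = 1 := by simpa using congrArg Subtype.val hy
    have := hSL x y x.2 y.2 hy'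
    exact ⟨this.1, y, this.2, hy'⟩
  have hVJ : ∀ x : V, (∀ M : Ideal V, M.IsMaximal → x ∈ M) → (x : S) ∈ J := by
    intro x hx
    have u : ∀ r : V, ((x * r + 1 : V) : S) ∈ R ∧ ∃ y ∈ R, ((x * r + 1 : V) : S) * y = 1 := by
      intro r
      apply unit
      intro M hM h
      apply hM.ne_top
      rw [Ideal.eq_top_iff_one]
      have := M.sub_mem h (M.mul_mem_right r (hx M hM))
      simpa using this
    rw [hJ]
    constructor
    · have := R.sub_mem (u 1).1 R.one_mem
      simpa using this
    · intro r hr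
      obtain ⟨y, hy, e⟩ := (u ⟨r, hRV hr⟩).2
      exact ⟨y, hy, by simpa using e⟩
  have crt : ∀ p : {M : Ideal V // M.IsMaximal} → V, ∃ x : V, ∀ M, x - p M ∈ M.1 := by
    intro p
    have : Finite {M : Ideal V // M.IsMaximal} := hfin.to_subtype
    refine Ideal.exists_forall_sub_mem_ideal (I := fun M : {M : Ideal V // M.IsMaximal} => M.1) ?_ p
    intro M N hMN
    exact (Ideal.isCoprime_iff_sup_eq).2
      (M.2.coprime_of_ne N.2 (fun h => hMN (Subtype.ext h)))
  have decomp : ∀ v : V, ∃ r : V, (r : S) ∈ R ∧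
      ∀ M : Ideal V, M.IsMaximal → (v - r ∈ M ∨ ((∀ x : V, x ^ 2 - x ∈ M))) := by
    intro v
    have loc : ∀ M : {M : Ideal V // M.IsMaximal}, ∃ pq : V × V, pq.1 ∉ M.1 ∧ pq.2 ∉ M.1 ∧
        (v - (pq.1 - pq.2) ∈ M.1 ∨ (∀ x : V, x ^ 2 - x ∈ M.1)) := by
      rintro ⟨M, hM⟩
      have h1 : (1 : V) ∉ M := fun h => hM.ne_top ((Ideal.eq_top_iff_one _).2 h)
      by_cases hs : ∀ x : V, x ^ 2 - x ∈ M
      · exact ⟨(1, 1), h1, h1, Or.inr hs⟩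
      by_cases hv : v ∈ M
      · exact ⟨(1, 1), h1, h1, Or.inl (by simpa using hv)⟩
      push Not at hs
      obtain ⟨x, hx⟩ := hs
      have hx0 : x ∉ M := fun h => hx (by
        have := M.mul_mem_left (x - 1) h
        convert this using 1; ring)
      have hx1 : x - 1 ∉ M := fun h => hx (by
        have := M.mul_mem_left x h
        convert this using 1; ring)
      refine ⟨(v * x, v * (x - 1)), fun h => (hM.isPrime.mem_or_mem h).elim hv hx0,
        fun h => (hM.isPrime.mem_or_mem h).elim hv hx1, Or.inl ?_⟩
      have : v - (v * x - v * (x - 1)) = 0 := by ring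
      simp only [this]
      exact M.zero_mem
    choose pq hp hq hpq using loc
    obtain ⟨x, hx⟩ := crt (fun M => (pq M).1)
    obtain ⟨y, hy⟩ := crt (fun M => (pq M).2)
    refine ⟨x - y, ?_, ?_⟩
    · have h1 := (unit x (fun M hM h => hp ⟨M, hM⟩ (by
        have := M.sub_mem h (hx ⟨M, hM⟩)
        simpa using this))).1
      have h2 := (unit y (fun M hM h => hq ⟨M, hM⟩ (by
        have := M.sub_mem h (hy ⟨M, hM⟩)
        simpa using this))).1
      simpa using R.sub_mem h1 h2
    · intro M hM
      refine (hpq ⟨M, hM⟩).imp_left fun h => ?_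
      have := M.add_mem (M.sub_mem h (hx ⟨M, hM⟩)) (hy ⟨M, hM⟩)
      convert this using 1
      ring
  have hJV : ∀ x : V, (x : S) ∈ J → ∀ M : Ideal V, M.IsMaximal → x ∈ M := by
    intro x hx M hM
    by_contra hxM
    obtain ⟨w, hw⟩ := hM.exists_inv hxM
    obtain ⟨i, hi, e⟩ := hw
    obtain ⟨r, hr, h⟩ := decomp (-w)
    have h1 : (1 : V) ∉ M := fun h => hM.ne_top ((Ideal.eq_top_iff_one _).2 h)
    have : ∃ r' : V, (r' : S) ∈ R ∧ -w - r' ∈ M := by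
      rcases h M hM with h | h
      · exact ⟨r, hr, h⟩
      · have := h (-w)
        have h' : (-w) * (-w - 1) ∈ M := by
          convert this using 1
          ring
        rcases hM.isPrime.mem_or_mem h' with h | h
        · exact ⟨0, R.zero_mem, by simpa using h⟩
        · exact ⟨1, R.one_mem, h⟩
    obtain ⟨r', hr', h'⟩ := this
    obtain ⟨y, hy, e'⟩ := ((hJ _).1 hx).2 r' hr'
    apply h1
    have h3 : x * r' + 1 ∈ M := by
      have := M.sub_mem hi (M.mul_mem_left x h')
      convert this using 1
      rw [← e]
      ring
    have h4 : (x * r' + 1) * ⟨y, hRV hy⟩ = 1 := by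
      apply Subtype.ext
      simpa using e'
    rw [← h4]
    exact M.mul_mem_right _ h3
  obtain ⟨r, hr, h⟩ := decomp v
  refine ⟨r, hr, ((v - r : V) : S), by simp, ?_, ?_, ?_⟩
  · intro j hj
    have hjR := ((hJ j).1 hj).1
    have := hVJ ((v - r) * ⟨j, hRV hjR⟩) (fun M hM => M.mul_mem_left _ (hJV ⟨j, hRV hjR⟩ hj M hM))
    simpa using this
  · have := hVJ ((v - r) ^ 2 - (v - r)) (fun M hM => by
      rcases h M hM with h | h
      · have := M.mul_mem_left (v - r - 1) h
        convert this using 1; ring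
      · exact h _)
    simpa using this
  · intro s hs
    have := hVJ ((⟨s, hRV hs⟩ ^ 2 - ⟨s, hRV hs⟩) * (v - r)) (fun M hM => by
      rcases h M hM with h | h
      · exact M.mul_mem_left _ h
      · exact M.mul_mem_right _ (h _))
    simpa using this

theorem exists_greatest_SL_subextension {S : Type*} [CommRing S] (R : Subring S)
    -- FCP: every chain of intermediate rings between `R` and `S` is finite
    (hFCP : ∀ C : Set (Subring S), (∀ T ∈ C, R ≤ T) → IsChain (· ≤ ·) C → C.Finite)
    -- `S` is semilocal
    (hS : {M : Ideal S | M.IsMaximal}.Finite) :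
    ∃ T : Subring S, R ≤ T ∧ R.IsSLWithin T ∧
      ∀ V : Subring S, R ≤ V → R.IsSLWithin V → V ≤ T := by
  let J : AddSubgroup S :=
    (Ideal.jacobson (⊥ : Ideal R)).toAddSubgroup.map R.subtype.toAddMonoidHom
  have hJ : ∀ x, x ∈ J ↔ x ∈ R ∧ ∀ r ∈ R, ∃ y ∈ R, (x * r + 1) * y = 1 := by
    intro x
    constructor
    · rintro ⟨x, hx, rfl⟩
      refine ⟨x.2, fun r hr => ?_⟩
      obtain ⟨y, hy⟩ := (Ideal.mem_jacobson_bot.1 hx ⟨r, hr⟩).exists_right_inv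
      exact ⟨y, y.2, by simpa using congrArg Subtype.val hy⟩
    · rintro ⟨hx, h⟩
      refine ⟨⟨x, hx⟩, ?_, rfl⟩
      refine Ideal.mem_jacobson_bot.2 fun r => ?_
      obtain ⟨y, hy, e⟩ := h r r.2
      exact IsUnit.of_mul_eq_one ⟨y, hy⟩ (Subtype.ext (by simpa using e))
  obtain ⟨T, hRT, hT, h⟩ := SLaux_T R J (fun j hj => ((hJ j).1 hj).1) (by
    rintro r hr _ ⟨x, hx, rfl⟩
    exact ⟨⟨r, hr⟩ * x, Ideal.mul_mem_left _ _ hx, rfl⟩)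
  refine ⟨T, hRT, hT, fun V hV hSL v hv => ?_⟩
  exact (h v).2 (SLaux_le R V hV hSL (SLaux_semilocal R hFCP hS V hV) J hJ ⟨v, hv⟩)
end
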